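/- The sum of the absolute values of the eigenvalues of the block matrix M = [[J_c, J_{c×k}], [J_{k×c}, 0_k]] equals √(c² + 4ck). -/

import Mathlib

open Polynomial Matrix

/-- The block matrix `M = [[J_c, J_{c×k}], [J_{k×c}, 0_k]]`. -/
noncomputable def shadowM (c k : ℕ) : Matrix (Fin c ⊕ Fin k) (Fin c ⊕ Fin k) ℝ :=
  Matrix.fromBlocks (Matrix.of fun _ _ => 1) (Matrix.of fun _ _ => 1)
    (Matrix.of fun _ _ => 1) 0

/-- The energy of a real matrix: the sum of the absolute values of its eigenvalues
(the roots of its characteristic polynomial) counted with multiplicity. -/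
noncomputable def energy {n : Type*} [Fintype n] [DecidableEq n] (M : Matrix n n ℝ) : ℝ :=
  (M.charpoly.roots.map fun x => |x|).sum

/-- The left factor of the rank-two factorization of `shadowM`: its columns are the indicators
of the two blocks. -/
noncomputable def shadowLeft (c k : ℕ) : Matrix (Fin c ⊕ Fin k) (Fin 2) ℝ :=
  Matrix.of (Sum.elim (fun _ => ![1, 0]) (fun _ => ![0, 1]))

/-- The right factor of the rank-two factorization of `shadowM`: its rows are the all-ones vector
and the indicator of the first block. -/
noncomputable def shadowRight (c k : ℕ) : Matrix (Fin 2) (Fin c ⊕ Fin k) ℝ :=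
  Matrix.of ![fun _ => 1, Sum.elim (fun _ => 1) (fun _ => 0)]

lemma shadowLeft_mul_shadowRight (c k : ℕ) :
    shadowLeft c k * shadowRight c k = shadowM c k := by
  ext i j
  rcases i with i | i <;> rcases j with j | j <;>
    simp [shadowLeft, shadowRight, shadowM, Matrix.mul_apply, Fin.sum_univ_two]

lemma shadowRight_mul_shadowLeft (c k : ℕ) :
    shadowRight c k * shadowLeft c k = !![(c : ℝ), (k : ℝ); (c : ℝ), 0] := by
  ext i j
  fin_cases i <;> fin_cases j <;>
    simp [shadowLeft, shadowRight, Matrix.mul_apply]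

lemma X_pow_two_mul_charpoly_shadowM (c k : ℕ) :
    X ^ 2 * (shadowM c k).charpoly =
      X ^ (c + k) * (X ^ 2 - C (c : ℝ) * X - C ((c : ℝ) * k)) := by
  have h := Matrix.charpoly_mul_comm' (shadowLeft c k) (shadowRight c k)
  rw [shadowLeft_mul_shadowRight, shadowRight_mul_shadowLeft, Matrix.charpoly_fin_two] at h
  simp only [Fintype.card_fin, Fintype.card_sum] at h
  rw [h]
  simp [Matrix.trace_fin_two, Matrix.det_fin_two]
  ring

/-- The sum of the absolute values of the roots is unchanged by a factor `X ^ n`. -/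
lemma sum_abs_roots_X_pow_mul (n : ℕ) {p : ℝ[X]} (hp : p ≠ 0) :
    ((X ^ n * p).roots.map fun x => |x|).sum = (p.roots.map fun x => |x|).sum := by
  rw [roots_mul (mul_ne_zero (pow_ne_zero n X_ne_zero) hp), roots_X_pow]
  simp [Multiset.map_nsmul, Multiset.sum_nsmul]

/-- A monic real quadratic with nonpositive constant term has roots whose absolute values sum to
the square root of the discriminant. -/
lemma sum_abs_roots_quadratic {b d : ℝ} (hd : 0 ≤ d) :
    ((X ^ 2 - C b * X - C d : ℝ[X]).roots.map fun x => |x|).sum = √(b ^ 2 + 4 * d) := by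
  set s := √(b ^ 2 + 4 * d)
  have hs : s ^ 2 = b ^ 2 + 4 * d := Real.sq_sqrt (by positivity)
  have hbs : |b| ≤ s := Real.abs_le_sqrt (by linarith)
  obtain ⟨h₁, h₂⟩ := abs_le.mp hbs
  have hfac : (X ^ 2 - C b * X - C d : ℝ[X]) = (X - C ((b + s) / 2)) * (X - C ((b - s) / 2)) := by
    have hsum : (C b : ℝ[X]) = C ((b + s) / 2) + C ((b - s) / 2) := by
      rw [← C_add]; congr 1; ring
    have hprod : (C d : ℝ[X]) = -(C ((b + s) / 2) * C ((b - s) / 2)) := by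
      rw [← C_mul, ← C_neg]; congr 1; linarith
    rw [hsum, hprod]; ring
  rw [hfac, roots_mul (mul_ne_zero (X_sub_C_ne_zero _) (X_sub_C_ne_zero _)), roots_X_sub_C,
    roots_X_sub_C, Multiset.map_add, Multiset.sum_add, Multiset.map_singleton,
    Multiset.map_singleton, Multiset.sum_singleton, Multiset.sum_singleton,
    abs_of_nonneg (by linarith), abs_of_nonpos (by linarith)]
  ring

theorem energy_shadowM (c k : ℕ) (hc : 1 ≤ c) (hk : 1 ≤ k) :
    energy (shadowM c k) = Real.sqrt ((c : ℝ) ^ 2 + 4 * c * k) := by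
  have hmonic := (shadowM c k).charpoly_monic
  have hX := X_pow_two_mul_charpoly_shadowM c k
  have hq : (X ^ 2 - C (c : ℝ) * X - C ((c : ℝ) * k) : ℝ[X]) ≠ 0 := by
    intro h
    rw [h, mul_zero] at hX
    exact mul_ne_zero (pow_ne_zero 2 X_ne_zero) hmonic.ne_zero hX
  rw [energy, ← sum_abs_roots_X_pow_mul 2 hmonic.ne_zero, hX, sum_abs_roots_X_pow_mul _ hq,
    sum_abs_roots_quadratic (by positivity), mul_assoc]
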